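/- Let d ≥ 1 be an integer. There exists a constant C, depending only on d, such that for all integers n ≥ d and m ≥ 2, the mean μ_{n,m} and variance σ²_{n,m} of the number of urns containing exactly d balls in the uniform occupancy model satisfy σ²_{n,m} ≤ C · μ_{n,m}. -/

import Mathlib

open MeasureTheory ProbabilityTheory

/-- The uniform occupancy model: `n` balls are placed independently and uniformly at
random into `m` urns. -/
noncomputable def occ (n m : ℕ) : Measure (Fin n → Fin m) :=
  (Fintype.card (Fin n → Fin m) : ENNReal)⁻¹ • Measure.count

/-- The number of balls in urn `i`. -/
def ballCount {n m : ℕ} (ω : Fin n → Fin m) (i : Fin m) : ℕ :=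
  (Finset.univ.filter fun b => ω b = i).card

/-- The number of urns containing exactly `d` balls. -/
def urnCount (d : ℕ) {n m : ℕ} (ω : Fin n → Fin m) : ℕ :=
  (Finset.univ.filter fun i => ballCount ω i = d).card

/-- `μ_{n,m}`, the mean number of urns containing exactly `d` balls. -/
noncomputable def occMean (d n m : ℕ) : ℝ :=
  ∫ ω, (urnCount d ω : ℝ) ∂(occ n m)


/-- `σ²_{n,m}`, the variance of the number of urns containing exactly `d` balls. -/
noncomputable def occVar (d n m : ℕ) : ℝ :=
  variance (fun ω => (urnCount d ω : ℝ)) (occ n m)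

open Finset in
/-- The number of placements in which the set of balls in urn `i` is exactly `A`. -/
theorem card_filter_fiber_eq {n m : ℕ} (i : Fin m) (A : Finset (Fin n)) :
    #{ω : Fin n → Fin m | ({b | ω b = i} : Finset (Fin n)) = A} = (m - 1) ^ (n - #A) := by
  have h : ({ω : Fin n → Fin m | ({b | ω b = i} : Finset (Fin n)) = A} : Finset _) =
      Fintype.piFinset fun b => if b ∈ A then {i} else {i}ᶜ := by
    ext ω
    simp only [mem_filter, mem_univ, true_and, Fintype.mem_piFinset, Finset.ext_iff]
    refine forall_congr' fun b => ?_
    by_cases hb : b ∈ A <;> simp [hb]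
  rw [h, Fintype.card_piFinset]
  simp only [apply_ite Finset.card, card_singleton, card_compl, Fintype.card_fin]
  simp [prod_ite, filter_not, card_sdiff]

open Finset in
/-- The number of placements in which the balls in two distinct urns are exactly the disjoint
sets `A` and `B`. -/
theorem card_filter_fiber_eq_and_fiber_eq {n m : ℕ} {i j : Fin m} (hij : i ≠ j)
    {A B : Finset (Fin n)} (hAB : Disjoint A B) :
    #{ω : Fin n → Fin m | ({b | ω b = i} : Finset (Fin n)) = A ∧
      ({b | ω b = j} : Finset (Fin n)) = B} = (m - 2) ^ (n - (#A + #B)) := by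
  have h : ({ω : Fin n → Fin m | ({b | ω b = i} : Finset (Fin n)) = A ∧
      ({b | ω b = j} : Finset (Fin n)) = B} : Finset _) =
      Fintype.piFinset fun b =>
        if b ∈ A ∪ B then (if b ∈ A then {i} else {j}) else {i, j}ᶜ := by
    ext ω
    simp only [mem_filter, mem_univ, true_and, Fintype.mem_piFinset, Finset.ext_iff,
      ← forall_and]
    refine forall_congr' fun b => ?_
    have hb' := fun h : b ∈ A => Finset.disjoint_left.1 hAB h
    by_cases hA : b ∈ A <;> by_cases hB : b ∈ B <;> simp [hA, hB] <;> grind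
  rw [h, Fintype.card_piFinset]
  simp only [apply_ite Finset.card, card_singleton, card_compl, Fintype.card_fin, ite_self,
    card_pair hij]
  rw [prod_ite, prod_const_one, one_mul, prod_const, filter_not, filter_mem_eq_inter,
    univ_inter, card_sdiff, inter_univ, card_union_of_disjoint hAB, card_univ, Fintype.card_fin]

open Finset in
/-- The number of placements in which urn `i` holds exactly `d` balls. -/
theorem card_filter_ballCount_eq (d n m : ℕ) (i : Fin m) :
    #{ω : Fin n → Fin m | ballCount ω i = d} = n.choose d * (m - 1) ^ (n - d) := by
  rw [card_eq_sum_card_fiberwise (f := fun ω => ({b | ω b = i} : Finset (Fin n)))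
    (t := powersetCard d univ) (fun ω hω => by simpa [ballCount] using (mem_filter.1 (mem_coe.1 hω)).2)]
  have h : ∀ A ∈ powersetCard d (univ : Finset (Fin n)),
      #{ω ∈ ({ω : Fin n → Fin m | ballCount ω i = d} : Finset _) |
        ({b | ω b = i} : Finset (Fin n)) = A} = (m - 1) ^ (n - d) := by
    intro A hA
    have hA' : #A = d := (mem_powersetCard.1 hA).2
    rw [← hA', ← card_filter_fiber_eq i A, filter_filter]
    congr 1
    ext ω
    simp only [mem_filter, mem_univ, true_and, and_iff_right_iff_imp]
    intro h
    rw [ballCount, h]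
  rw [sum_congr rfl h]
  simp

/-- Negative dependence of the fibers over two urns, in the form of a count comparison. -/
theorem sub_two_pow_mul_le (d k m : ℕ) :
    (m - 2) ^ k * (m ^ (k + 2 * d) * (m - 1) ^ (2 * d)) ≤
      ((m - 1) ^ (k + d)) ^ 2 * m ^ (2 * d) := by
  have h : (m - 2) * m ≤ (m - 1) ^ 2 := by
    rcases m with _ | _ | m
    · simp
    · simp
    · simp only [Nat.add_sub_cancel]
      have : m + 1 + 1 - 2 = m := by omega
      rw [this]
      nlinarith
  calc (m - 2) ^ k * (m ^ (k + 2 * d) * (m - 1) ^ (2 * d))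
      = ((m - 2) * m) ^ k * ((m - 1) ^ (2 * d) * m ^ (2 * d)) := by ring
    _ ≤ ((m - 1) ^ 2) ^ k * ((m - 1) ^ (2 * d) * m ^ (2 * d)) := by gcongr
    _ = _ := by ring

open Finset in
/-- Two distinct urns both holding exactly `d` balls are negatively dependent up to the
factor `(1 - 1 / m) ^ (2 * d)`. -/
theorem card_filter_ballCount_pair_mul_le (d n m : ℕ) {i j : Fin m} (hij : i ≠ j) :
    #{ω : Fin n → Fin m | ballCount ω i = d ∧ ballCount ω j = d} *
      (m ^ n * (m - 1) ^ (2 * d)) ≤ (n.choose d * (m - 1) ^ (n - d)) ^ 2 * m ^ (2 * d) := by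
  rw [card_eq_sum_card_fiberwise
    (f := fun ω => (({b | ω b = i} : Finset (Fin n)), ({b | ω b = j} : Finset (Fin n))))
    (t := powersetCard d univ ×ˢ powersetCard d univ)
    (fun ω hω => by simpa [ballCount] using (mem_filter.1 (mem_coe.1 hω)).2), sum_mul]
  have h : ∀ P ∈ powersetCard d (univ : Finset (Fin n)) ×ˢ powersetCard d univ,
      #{ω ∈ ({ω : Fin n → Fin m | ballCount ω i = d ∧ ballCount ω j = d} : Finset _) |
        (({b | ω b = i} : Finset (Fin n)), ({b | ω b = j} : Finset (Fin n))) = P} *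
        (m ^ n * (m - 1) ^ (2 * d)) ≤ ((m - 1) ^ (n - d)) ^ 2 * m ^ (2 * d) := by
    rintro ⟨A, B⟩ hP
    simp only [mem_product, mem_powersetCard, subset_univ, true_and] at hP
    by_cases hAB : Disjoint A B
    · have hcard : #A + #B ≤ n := by
        rw [← card_union_of_disjoint hAB]
        simpa using card_le_univ (A ∪ B)
      obtain ⟨k, rfl⟩ : ∃ k, n = k + 2 * d := ⟨n - 2 * d, by omega⟩
      refine le_trans (Nat.mul_le_mul_right _ (card_le_card
        (t := {ω | ({b | ω b = i} : Finset (Fin (k + 2 * d))) = A ∧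
          ({b | ω b = j} : Finset (Fin (k + 2 * d))) = B}) ?_)) ?_
      · intro ω hω
        simp only [mem_filter, Prod.mk.injEq] at hω ⊢
        exact ⟨mem_univ _, hω.2⟩
      · rw [card_filter_fiber_eq_and_fiber_eq hij hAB,
          show k + 2 * d - (#A + #B) = k by omega, show k + 2 * d - d = k + d by omega]
        exact sub_two_pow_mul_le d k m
    · rw [card_eq_zero.2, zero_mul]
      · exact Nat.zero_le _
      · refine filter_eq_empty_iff.2 fun ω _ hω => hAB ?_
        simp only [Prod.mk.injEq] at hω
        rw [← hω.1, ← hω.2, Finset.disjoint_left]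
        intro b hb hb'
        simp only [mem_filter, mem_univ, true_and] at hb hb'
        exact hij (hb.symm.trans hb')
  refine (sum_le_sum h).trans (le_of_eq ?_)
  simp only [sum_const, card_product, card_powersetCard, card_univ, Fintype.card_fin,
    smul_eq_mul]
  ring

/-- Integration against the occupancy measure is averaging. -/
theorem integral_occ (n m : ℕ) (f : (Fin n → Fin m) → ℝ) :
    ∫ ω, f ω ∂(occ n m) = (∑ ω, f ω) / (m : ℝ) ^ n := by
  rw [occ, integral_smul_measure, integral_count]
  simp [div_eq_inv_mul]

theorem isProbabilityMeasure_occ (n m : ℕ) [NeZero m] : IsProbabilityMeasure (occ n m) := by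
  refine ⟨?_⟩
  rw [occ, Measure.smul_apply, Measure.count_univ, smul_eq_mul, ENat.card_eq_coe_fintype_card]
  exact ENNReal.inv_mul_cancel (by simp [NeZero.ne m]) (by simp)

open Finset in
theorem sum_urnCount (d n m : ℕ) :
    ∑ ω : Fin n → Fin m, (urnCount d ω : ℝ) =
      ∑ i : Fin m, (#{ω : Fin n → Fin m | ballCount ω i = d} : ℝ) := by
  simp only [urnCount, card_filter, Nat.cast_sum]
  exact sum_comm

open Finset in
theorem sum_urnCount_sq (d n m : ℕ) :
    ∑ ω : Fin n → Fin m, (urnCount d ω : ℝ) ^ 2 =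
      ∑ i : Fin m, ∑ j : Fin m,
        (#{ω : Fin n → Fin m | ballCount ω i = d ∧ ballCount ω j = d} : ℝ) := by
  simp only [urnCount, card_filter, Nat.cast_sum, sq, sum_mul_sum]
  rw [sum_comm]
  refine sum_congr rfl fun i _ => ?_
  rw [sum_comm]
  refine sum_congr rfl fun j _ => sum_congr rfl fun ω _ => ?_
  by_cases h : ballCount ω i = d <;> simp [h]

/-- Lemma 3.2, Part 2(a): `σ²_{n,m} ≤ C·μ_{n,m}` uniformly in `n ≥ d`, `m ≥ 2`. -/
theorem occupancy_variance_le_mean (d : ℕ) (hd : 1 ≤ d) :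
    ∃ C : ℝ, 0 < C ∧ ∀ n m : ℕ, d ≤ n → 2 ≤ m →
      occVar d n m ≤ C * occMean d n m := by
  refine ⟨1 + 2 * d, by positivity, fun n m _ hm => ?_⟩
  have : NeZero m := ⟨by omega⟩
  have := isProbabilityMeasure_occ n m
  have hm0 : (0 : ℝ) < m := by exact_mod_cast (by omega : 0 < m)
  have hm1 : (1 : ℝ) ≤ m := by exact_mod_cast (by omega : 1 ≤ m)
  have hT : (0 : ℝ) < (m : ℝ) ^ n := by positivity
  set N : ℕ := n.choose d * (m - 1) ^ (n - d) with hN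
  set p : ℝ := N / (m : ℝ) ^ n with hp
  have hp0 : 0 ≤ p := by positivity
  have hmean : occMean d n m = m * p := by
    rw [occMean, integral_occ, sum_urnCount]
    simp only [card_filter_ballCount_eq, ← hN]
    simp [hp, mul_div_assoc]
  have hpair : ∀ i j : Fin m, i ≠ j →
      ((Finset.univ.filter fun ω : Fin n → Fin m =>
        ballCount ω i = d ∧ ballCount ω j = d).card : ℝ) / (m : ℝ) ^ n ≤
        p ^ 2 + 2 * d / m * p := by
    intro i j hij
    have h1 := card_filter_ballCount_pair_mul_le d n m hij
    have h2 : (Finset.univ.filter fun ω : Fin n → Fin m =>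
        ballCount ω i = d ∧ ballCount ω j = d).card ≤ N := by
      rw [hN, ← card_filter_ballCount_eq d n m i]
      exact Finset.card_le_card fun ω hω => by
        simp only [Finset.mem_filter] at hω ⊢
        exact ⟨hω.1, hω.2.1⟩
    rw [← hN] at h1
    generalize (Finset.univ.filter fun ω : Fin n → Fin m =>
        ballCount ω i = d ∧ ballCount ω j = d).card = K at h1 h2
    set q : ℝ := K / (m : ℝ) ^ n with hq
    have hq0 : 0 ≤ q := by positivity
    have hqp : q ≤ p := by
      rw [hq, hp]
      gcongr
    have h3 : (K : ℝ) * ((m : ℝ) ^ n * ((m : ℝ) - 1) ^ (2 * d)) ≤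
        (N : ℝ) ^ 2 * (m : ℝ) ^ (2 * d) := by
      have := (Nat.cast_le (α := ℝ)).2 h1
      push_cast [Nat.cast_sub (by omega : 1 ≤ m)] at this
      exact this
    have h4 : q * (1 - 1 / (m : ℝ)) ^ (2 * d) ≤ p ^ 2 := by
      have e : 1 - 1 / (m : ℝ) = ((m : ℝ) - 1) / m := by field_simp
      rw [e, div_pow, hq, hp, div_pow, div_mul_div_comm, div_le_div_iff₀ (by positivity)
        (by positivity)]
      calc (K : ℝ) * ((m : ℝ) - 1) ^ (2 * d) * ((m : ℝ) ^ n) ^ 2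
          = (K * ((m : ℝ) ^ n * ((m : ℝ) - 1) ^ (2 * d))) * (m : ℝ) ^ n := by ring
        _ ≤ ((N : ℝ) ^ 2 * (m : ℝ) ^ (2 * d)) * (m : ℝ) ^ n := by gcongr
        _ = _ := by ring
    have h5 : 1 - 2 * d / (m : ℝ) ≤ (1 - 1 / (m : ℝ)) ^ (2 * d) := by
      have hinv : 1 / (m : ℝ) ≤ 1 := by
        rw [div_le_one hm0]
        exact hm1
      have := one_add_mul_le_pow (a := -(1 / (m : ℝ))) (by linarith) (2 * d)
      calc 1 - 2 * d / (m : ℝ) = 1 + ((2 * d : ℕ) : ℝ) * -(1 / (m : ℝ)) := by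
            push_cast
            ring
        _ ≤ _ := this
        _ = _ := by ring
    have h6 : q * (1 - 2 * d / (m : ℝ)) ≤ p ^ 2 := (by gcongr : _ ≤ _).trans h4
    have h7 : 2 * d / (m : ℝ) * q ≤ 2 * d / (m : ℝ) * p := by gcongr
    linarith
  have hsq : ∫ ω, (urnCount d ω : ℝ) ^ 2 ∂(occ n m) ≤ (m * p) ^ 2 + (1 + 2 * d) * (m * p) := by
    rw [integral_occ, sum_urnCount_sq, Finset.sum_div]
    simp only [Finset.sum_div]
    calc _ ≤ ∑ i : Fin m, ∑ j : Fin m,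
          ((p ^ 2 + 2 * d / m * p) + if i = j then p else 0) := by
          refine Finset.sum_le_sum fun i _ => Finset.sum_le_sum fun j _ => ?_
          by_cases hij : i = j
          · subst hij
            simp only [and_self, card_filter_ballCount_eq, ← hN, ← hp, if_true]
            have : 0 ≤ p ^ 2 + 2 * d / m * p := by positivity
            linarith
          · simpa [hij] using hpair i j hij
      _ = _ := by
          simp only [Finset.sum_add_distrib, Finset.sum_const, Finset.card_univ,
            Fintype.card_fin, nsmul_eq_mul, Finset.sum_ite_eq, Finset.mem_univ, if_true]
          field_simp
          ring
  have hvar : occVar d n m =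
      ∫ ω, (urnCount d ω : ℝ) ^ 2 ∂(occ n m) - (occMean d n m) ^ 2 := by
    rw [occVar, variance_eq_sub (MemLp.of_discrete)]
    rfl
  rw [hvar, hmean]
  linarith
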